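/- For all natural numbers k and t with t ≥ 2^k: every play of the reversible pebble game on t nodes that contains some configuration in which a node with index at least 2^k is pebbled must contain some configuration with more than k pebbles (i.e., with at least k+1 pebbled nodes). -/

import Mathlib

/- Bennett's reversible pebble game on `t` nodes numbered `1, …, t`.
A configuration is a finite set `P` of pebbled node indices (a subset of
`{1, …, t}`).  A legal move toggles the pebbled status of exactly one node
`j` with `1 ≤ j ≤ t`, provided `j = 1` or node `j - 1` is pebbled. -/
def PebbleMove (t : ℕ) (P P' : Finset ℕ) : Prop :=
  ∃ j : ℕ, 1 ≤ j ∧ j ≤ t ∧ (j = 1 ∨ j - 1 ∈ P) ∧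
    P' = (if j ∈ P then P.erase j else insert j P)

/-- A play is a finite sequence of configurations beginning with the empty
configuration, each consecutive pair related by a legal move. -/
def PebblePlay (t : ℕ) (L : List (Finset ℕ)) : Prop :=
  L.head? = some ∅ ∧ L.Chain' (PebbleMove t)

def PMv (P P' : Finset ℕ) : Prop :=
  ∃ j : ℕ, 1 ≤ j ∧ (j = 1 ∨ j - 1 ∈ P) ∧ (∀ i, i ≠ j → (i ∈ P' ↔ i ∈ P)) ∧ (j ∈ P' ↔ j ∉ P)

theorem PMv.symm {P P' : Finset ℕ} (h : PMv P P') : PMv P' P := by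
  obtain ⟨j, h1, h2, h3, h4⟩ := h
  refine ⟨j, h1, ?_, fun i hi => (h3 i hi).symm, by tauto⟩
  rcases h2 with h2 | h2
  · exact Or.inl h2
  · exact Or.inr ((h3 (j-1) (by omega)).2 h2)

inductive PR (k : ℕ) : Finset ℕ → Prop
  | empty : PR k ∅
  | step (P P' : Finset ℕ) : PR k P → PMv P P' → P'.card ≤ k → PR k P'

def pLo (N : ℕ) (P : Finset ℕ) : Finset ℕ := P.filter (fun i => i ≤ N)
def pUp (N : ℕ) (P : Finset ℕ) : Finset ℕ := (P.filter (fun i => ¬ i ≤ N)).image (fun i => i - N)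

theorem mem_pLo {N i : ℕ} {P : Finset ℕ} : i ∈ pLo N P ↔ i ∈ P ∧ i ≤ N := by simp [pLo]

theorem mem_pUp {N i : ℕ} {P : Finset ℕ} : i ∈ pUp N P ↔ 1 ≤ i ∧ i + N ∈ P := by
  simp only [pUp, Finset.mem_image, Finset.mem_filter]
  constructor
  · rintro ⟨a, ⟨ha, hb⟩, rfl⟩
    refine ⟨by omega, ?_⟩
    rwa [Nat.sub_add_cancel (by omega)]
  · rintro ⟨h1, h2⟩
    exact ⟨i + N, ⟨h2, by omega⟩, by omega⟩

theorem card_pLo_pUp (N : ℕ) (P : Finset ℕ) : (pLo N P).card + (pUp N P).card = P.card := by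
  rw [pUp, Finset.card_image_of_injOn, pLo, Finset.card_filter_add_card_filter_not]
  intro a ha b hb hab
  simp at ha hb hab
  omega

theorem PR_bound (k : ℕ) : ∀ P, PR k P → ∀ j ∈ P, j < 2 ^ k := by
  induction k with
  | zero =>
    intro P h j hj
    cases h with
    | empty => simp at hj
    | step Q _ _ _ hc =>
      have : P = ∅ := by simpa using hc
      simp [this] at hj
  | succ k ih =>
    have hN : 1 ≤ 2 ^ k := Nat.one_le_two_pow
    have hpow : 2 ^ (k+1) = 2 ^ k + 2 ^ k := by ring
    generalize hNN : 2 ^ k = N at *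
    have key : ∀ P, PR (k+1) P → P.card ≤ k + 1 ∧
        (pUp N P = ∅ ∨ (¬ PR k (pLo N P) ∧ PR k (pUp N P))) := by
      intro P h
      induction h with
      | empty => exact ⟨by simp, Or.inl (by simp [pUp])⟩
      | step P P' _ hm hc ihP =>
        obtain ⟨hcP, hinv⟩ := ihP
        refine ⟨hc, ?_⟩
        have c1 := card_pLo_pUp N P
        have c2 := card_pLo_pUp N P'
        by_cases hup' : pUp N P' = ∅
        · exact Or.inl hup'
        right
        have hup'c : 1 ≤ (pUp N P').card :=
          Finset.card_pos.2 (Finset.nonempty_iff_ne_empty.2 hup')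
        obtain ⟨j, h1, h2, h3, h4⟩ := hm
        by_cases hjN : j ≤ N
        · have e : pUp N P' = pUp N P := by
            ext i
            rw [mem_pUp, mem_pUp]
            constructor
            · rintro ⟨a, b⟩
              exact ⟨a, (h3 _ (by omega)).1 b⟩
            · rintro ⟨a, b⟩
              exact ⟨a, (h3 _ (by omega)).2 b⟩
          rw [e] at hup' hup'c c2 ⊢
          rcases hinv with h | ⟨ha, hb⟩
          · exact absurd h hup'
          refine ⟨fun hr => ha (PR.step _ _ hr (PMv.symm ?_) (by omega)), hb⟩
          refine ⟨j, h1, ?_, ?_, ?_⟩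
          · rcases h2 with h2 | h2
            · exact Or.inl h2
            · exact Or.inr (mem_pLo.2 ⟨h2, by omega⟩)
          · intro i hi
            rw [mem_pLo, mem_pLo, h3 i hi]
          · rw [mem_pLo, mem_pLo]; tauto
        · have e : pLo N P' = pLo N P := by
            ext i
            rw [mem_pLo, mem_pLo]
            constructor
            · rintro ⟨a, b⟩
              exact ⟨(h3 _ (by omega)).1 a, b⟩
            · rintro ⟨a, b⟩
              exact ⟨(h3 _ (by omega)).2 a, b⟩
          have hjP : j - 1 ∈ P := by
            rcases h2 with h2 | h2
            · omega
            · exact h2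
          have hmv : PMv (pUp N P) (pUp N P') := by
            refine ⟨j - N, by omega, ?_, ?_, ?_⟩
            · by_cases hj : j - N = 1
              · exact Or.inl hj
              · right
                rw [mem_pUp]
                refine ⟨by omega, ?_⟩
                rwa [show j - N - 1 + N = j - 1 by omega]
            · intro i hi
              rw [mem_pUp, mem_pUp, h3 _ (by omega)]
            · rw [mem_pUp, mem_pUp, Nat.sub_add_cancel (by omega), h4]
              have : 1 ≤ j - N := by omega
              tauto
          rw [e] at c2 ⊢
          have hlo : ¬ PR k (pLo N P) ∧ PR k (pUp N P) := by
            rcases hinv with h | h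
            · refine ⟨fun hr => ?_, by rw [h]; exact PR.empty⟩
              have hj : j = N + 1 := by
                by_contra hne
                have : j - 1 - N ∈ pUp N P := by
                  rw [mem_pUp]
                  refine ⟨by omega, ?_⟩
                  rwa [Nat.sub_add_cancel (by omega)]
                simp [h] at this
              have := ih _ hr N (mem_pLo.2 ⟨by simpa [hj] using hjP, le_rfl⟩)
              omega
            · exact h
          refine ⟨hlo.1, PR.step _ _ hlo.2 hmv ?_⟩
          have : 1 ≤ (pLo N P).card := by
            apply Finset.card_pos.2
            rw [Finset.nonempty_iff_ne_empty]
            intro h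
            exact hlo.1 (h ▸ PR.empty)
          omega
    intro P hP j hj
    rw [hpow]
    by_cases hjN : j ≤ N
    · omega
    have hm : j - N ∈ pUp N P := mem_pUp.2 ⟨by omega, by rwa [Nat.sub_add_cancel (by omega)]⟩
    rcases (key P hP).2 with h | ⟨_, h⟩
    · simp [h] at hm
    · have := ih _ h _ hm
      omega

theorem PebbleMove.toPMv {t : ℕ} {P P' : Finset ℕ} (h : PebbleMove t P P') : PMv P P' := by
  obtain ⟨j, h1, _, h2, rfl⟩ := h
  refine ⟨j, h1, h2, ?_, ?_⟩
  · intro i hi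
    split_ifs <;> simp [hi]
  · split_ifs with h <;> simp [h]

theorem PR_chain (k t : ℕ) : ∀ (L : List (Finset ℕ)) (P : Finset ℕ), PR k P →
    List.IsChain (PebbleMove t) (P :: L) → (∀ Q ∈ L, Q.card ≤ k) → ∀ Q ∈ P :: L, PR k Q := by
  intro L
  induction L with
  | nil => intro P hP _ _ Q hQ; simp at hQ; exact hQ ▸ hP
  | cons A L ih =>
    intro P hP hc hk Q hQ
    rw [List.isChain_cons_cons] at hc
    rcases List.mem_cons.1 hQ with rfl | hQ
    · exact hP
    · exact ih A (PR.step _ _ hP hc.1.toPMv (hk A (by simp))) hc.2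
        (fun R hR => hk R (by simp [hR])) Q hQ

theorem pebble_game_space_lower_bound (k t : ℕ) (ht : 2 ^ k ≤ t)
    (L : List (Finset ℕ)) (hL : PebblePlay t L)
    (hreach : ∃ P ∈ L, ∃ j ∈ P, 2 ^ k ≤ j) :
    ∃ P ∈ L, k + 1 ≤ P.card := by
  by_contra! hcon
  obtain ⟨P, hP, j, hj, hjk⟩ := hreach
  obtain ⟨h1, h2⟩ := hL
  cases L with
  | nil => simp at hP
  | cons A L =>
    simp at h1
    subst h1
    have := PR_bound k P (PR_chain k t L ∅ PR.empty h2
      (fun Q hQ => by have := hcon Q (by simp [hQ]); omega) P hP) j hj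
    omega
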